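/- arXiv:1602.05748 — 2 statements merged into one kernel-verified Lean document; each statement's English description precedes it below -/
import Mathlib

section
/- Let D be a digraph of order n and let Y be a subset of the vertices of D with |Y| ≥ 4. Assume D is Y-strongly connected and Y satisfies condition A0. If C is a non-Hamiltonian directed cycle in D containing at least two vertices of Y, then for every vertex y of Y not on C there exists a C-bypass through y. -/
/-!
Basic definitions for finite digraphs (no loops, no multiple arcs), where the arc
relation is `A : V → V → Prop`.  Paths and cycles are given as lists of (distinct)
vertices.
-/

variable {V : Type*}

/-- A (directed) path, given by the list of its vertices. -/
def IsPathOn (A : V → V → Prop) (l : List V) : Prop :=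
  l ≠ [] ∧ l.Nodup ∧ l.Chain' A

/-- A (directed) cycle, given by the list of its vertices; its length (number of
arcs) equals the length of the list. -/
def IsCycleOn (A : V → V → Prop) (l : List V) : Prop :=
  2 ≤ l.length ∧ l.Nodup ∧ l.Chain' A ∧
    ∀ a ∈ l.getLast?, ∀ b ∈ l.head?, A a b

/-- A directed path from `a` to `b`. -/
def IsPathFromTo (A : V → V → Prop) (l : List V) (a b : V) : Prop :=
  IsPathOn A l ∧ l.head? = some a ∧ l.getLast? = some b

/-- Out-degree `d⁺(x)`. -/
noncomputable def outDeg (A : V → V → Prop) (x : V) : ℕ := {y | A x y}.ncard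

/-- In-degree `d⁻(x)`. -/
noncomputable def inDeg (A : V → V → Prop) (x : V) : ℕ := {y | A y x}.ncard

/-- Degree `d(x) = d⁺(x) + d⁻(x)`. -/
noncomputable def deg (A : V → V → Prop) (x : V) : ℕ := outDeg A x + inDeg A x

/-- Out-degree into a set, `d⁺(x, S)`. -/
noncomputable def outDegOn (A : V → V → Prop) (x : V) (S : Set V) : ℕ :=
  {y ∈ S | A x y}.ncard

/-- In-degree from a set, `d⁻(x, S)`. -/
noncomputable def inDegOn (A : V → V → Prop) (x : V) (S : Set V) : ℕ :=
  {y ∈ S | A y x}.ncard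

/-- Degree with respect to a set, `d(x, S) = d⁺(x, S) + d⁻(x, S)`. -/
noncomputable def degOn (A : V → V → Prop) (x : V) (S : Set V) : ℕ :=
  outDegOn A x S + inDegOn A x S

/-- Two distinct vertices are adjacent if there is an arc between them in some
direction. -/
def DAdj (A : V → V → Prop) (x y : V) : Prop := A x y ∨ A y x

/-- `D` is `S`-strongly connected: between any two distinct vertices of `S` there
are directed paths in both directions. -/
def SetStronglyConnected (A : V → V → Prop) (S : Set V) : Prop :=
  ∀ x ∈ S, ∀ y ∈ S, x ≠ y → ∃ l, IsPathFromTo A l x y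

/-- Strong connectivity. -/
def StronglyConnected (A : V → V → Prop) : Prop :=
  ∀ x y : V, x ≠ y → ∃ l, IsPathFromTo A l x y

/-- 2-strong connectivity: at least 3 vertices, and deleting any vertex leaves a
strongly connected digraph. -/
def TwoStronglyConnected [Fintype V] (A : V → V → Prop) : Prop :=
  3 ≤ Fintype.card V ∧
    ∀ w x y : V, x ≠ w → y ≠ w → x ≠ y → ∃ l, IsPathFromTo A l x y ∧ w ∉ l

/-- Condition `A₀` for a set `Y` of vertices. -/
def CondA0 [Fintype V] (A : V → V → Prop) (Y : Set V) : Prop :=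
  ∀ x ∈ Y, ∀ y ∈ Y, ∀ z ∈ Y,
    x ≠ y → x ≠ z → y ≠ z → ¬ DAdj A x y →
      (¬ A x z →
        deg A x + deg A y + outDeg A x + inDeg A z ≥ 3 * Fintype.card V - 2) ∧
      (¬ A z x →
        deg A x + deg A y + inDeg A x + outDeg A z ≥ 3 * Fintype.card V - 2)

/-- A `C`-bypass: a path of length at least two whose end-vertices lie on the
cycle `c` and whose internal vertices avoid `c`. -/
def IsBypass (A : V → V → Prop) (c p : List V) : Prop :=
  IsPathOn A p ∧ 3 ≤ p.length ∧
    (∀ a ∈ p.head?, a ∈ c) ∧ (∀ b ∈ p.getLast?, b ∈ c) ∧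
    ∀ v ∈ p.tail.dropLast, v ∉ c

/-- The vertex `y` can be inserted into the path `p`. -/
def CanInsert (A : V → V → Prop) (p : List V) (y : V) : Prop :=
  ∃ i, ∃ h : i + 1 < p.length, A (p[i]'(Nat.lt_of_succ_lt h)) y ∧ A y (p[i+1]'h)

/-- A `(C, x)`-path: a path from a vertex `u` of the cycle `c` to `x`, meeting `c`
only in `u`. -/
def IsCtoXPath (A : V → V → Prop) (c l : List V) (u x : V) : Prop :=
  IsPathFromTo A l u x ∧ u ∈ c ∧ ∀ v ∈ l, v ∈ c → v = u

/-- An `(x, C)`-path: a path from `x` to a vertex `v` of the cycle `c`, meeting `c`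
only in `v`. -/
def IsXtoCPath (A : V → V → Prop) (c l : List V) (x v : V) : Prop :=
  IsPathFromTo A l x v ∧ v ∈ c ∧ ∀ w ∈ l, w ∈ c → w = v

/-!
A connector from `x` to `y` is a vertex `t` with `x → t → y`. Counting neighbourhoods with
inclusion–exclusion turns condition `A₀` into the statement that certain pairs of vertices of `Y`
have many connectors between them: the bounds `3n - 2` and `3(n - 2)` differ by `4`.

Suppose no bypass of a vertex set `S` passes through `y`, and call a walk from `y` to `S` an exit.
If some `s ∈ S` has an arc to `y`, then every exit from `y` ends in `s`. A shortest exit meets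
nearly all connectors that are counted, so for `x ∈ S ∩ Y` other than `s` the pair `x`, `y` has few
of them; hence a fourth vertex of `Y` has enough connectors from `y` and to `x` to produce an exit
to a vertex other than `s`. If `y` has no arcs to or from `S`, the connectors from `x₁` to `y` and
from `y` to `x₂` must coincide for distinct `x₁, x₂ ∈ S`, and the connector bounds for the pairs
`y`, `x₁` and `y`, `x₂` contradict each other.
-/

section Cardinality

theorem ncard_le_two_of_subset_pair {s : Set V} {a b : V} (h : s ⊆ {a, b}) : s.ncard ≤ 2 :=
  (Set.ncard_le_ncard h).trans <| (Set.ncard_insert_le _ _).trans_eq <| by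
    rw [Set.ncard_singleton]

theorem exists_mem_notMem_of_length_lt_ncard {s : Set V} {l : List V} (h : l.length < s.ncard) :
    ∃ t ∈ s, t ∉ l := by
  classical
  have hl : (l.toFinset : Set V).ncard < s.ncard := by
    rw [Set.ncard_coe_finset]
    exact (List.toFinset_card_le l).trans_lt h
  simpa using Set.exists_mem_notMem_of_ncard_lt_ncard hl

theorem exists_mem_ne_ne_ne {s : Set V} (hs : 4 ≤ s.ncard) (a b c : V) :
    ∃ q ∈ s, q ≠ a ∧ q ≠ b ∧ q ≠ c := by
  simpa using exists_mem_notMem_of_length_lt_ncard (l := [a, b, c]) hs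

theorem ncard_add_two_le_card [Fintype V] {x y : V} (hxy : x ≠ y) {s : Set V}
    (hs : s ⊆ {x, y}ᶜ) : s.ncard + 2 ≤ Fintype.card V := by
  have hle := Set.ncard_le_ncard hs
  have hcompl := Set.ncard_add_ncard_compl ({x, y} : Set V)
  rw [Set.ncard_pair hxy, Nat.card_eq_fintype_card] at hcompl
  omega

end Cardinality

section Connectors

/-- The connectors from `x` to `y`: the middle vertices of the walks of length two. -/
def connectors (A : V → V → Prop) (x y : V) : Set V := {t | A x t} ∩ {t | A t y}

/-- The vertices having at least one of the two arcs required of a connector from `x` to `y`. -/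
def semiconnectors (A : V → V → Prop) (x y : V) : Set V := {t | A x t} ∪ {t | A t y}

/-- The connectors from `x` to `y` that are joined to `{x, y}` by at least three arcs; these are
the only ones that can push `d(x) + d(y)` above `2(n - 2)`. -/
def returnConnectors (A : V → V → Prop) (x y : V) : Set V :=
  connectors A x y ∩ semiconnectors A y x

/-- The form in which condition `A₀` is used. For `x` and `y` nonadjacent, the first two summands
bound the excess of `d(x) + d(y)` over `2(n - 2)`. -/
def ConnectorCond (A : V → V → Prop) (Y : Set V) : Prop :=
  ∀ x ∈ Y, ∀ y ∈ Y, ∀ z ∈ Y, x ≠ y → x ≠ z → y ≠ z → ¬ DAdj A x y →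
    (¬ A x z → 4 ≤ (returnConnectors A x y).ncard + (returnConnectors A y x).ncard +
      (connectors A x z).ncard) ∧
    (¬ A z x → 4 ≤ (returnConnectors A x y).ncard + (returnConnectors A y x).ncard +
      (connectors A z x).ncard)

variable {A : V → V → Prop} {Y : Set V}

theorem DAdj.symm {x y : V} (h : DAdj A x y) : DAdj A y x :=
  Or.symm h

theorem connectors_flip (x y : V) : connectors (flip A) x y = connectors A y x :=
  Set.inter_comm _ _

theorem semiconnectors_flip (x y : V) : semiconnectors (flip A) x y = semiconnectors A y x :=
  Set.union_comm _ _

theorem returnConnectors_flip (x y : V) :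
    returnConnectors (flip A) x y = returnConnectors A y x := by
  simp only [returnConnectors, connectors_flip, semiconnectors_flip]

theorem ConnectorCond.flip (h : ConnectorCond A Y) : ConnectorCond (flip A) Y := by
  intro x hx y hy z hz hxy hxz hyz hna
  simp only [returnConnectors_flip, connectors_flip, Nat.add_comm (returnConnectors A y x).ncard]
  exact (h x hx y hy z hz hxy hxz hyz fun h' => hna h'.symm).symm

theorem semiconnectors_subset_compl_pair (hl : ∀ v, ¬ A v v) {x y : V} (hxy : ¬ A x y) :
    semiconnectors A x y ⊆ {x, y}ᶜ := by
  rintro t ht (rfl | rfl)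
  exacts [ht.elim (hl t) hxy, ht.elim hxy (hl t)]

theorem outDeg_add_inDeg [Finite V] (x y : V) :
    outDeg A x + inDeg A y = (connectors A x y).ncard + (semiconnectors A x y).ncard :=
  (Set.ncard_inter_add_ncard_union _ _).symm

variable [Fintype V]

theorem outDeg_add_inDeg_le (hl : ∀ v, ¬ A v v) {x y : V} (hne : x ≠ y) (hxy : ¬ A x y) :
    outDeg A x + inDeg A y + 2 ≤ Fintype.card V + (connectors A x y).ncard := by
  have hsemi := ncard_add_two_le_card hne (semiconnectors_subset_compl_pair hl hxy)
  rw [outDeg_add_inDeg]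
  omega

theorem ncard_connectors_add_ncard_semiconnectors_le (hl : ∀ v, ¬ A v v) {x y : V} (hne : x ≠ y)
    (hna : ¬ DAdj A x y) : (connectors A x y).ncard + (semiconnectors A y x).ncard + 2 ≤
      Fintype.card V + (returnConnectors A x y).ncard := by
  obtain ⟨hxy, hyx⟩ := not_or.1 hna
  have hunion : connectors A x y ∪ semiconnectors A y x ⊆ {x, y}ᶜ :=
    Set.union_subset
      (inf_le_sup.trans (semiconnectors_subset_compl_pair hl hxy))
      (Set.pair_comm y x ▸ semiconnectors_subset_compl_pair hl hyx)
  have hcard := ncard_add_two_le_card hne hunion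
  have hsum := Set.ncard_union_add_ncard_inter (connectors A x y) (semiconnectors A y x)
  rw [returnConnectors]
  omega

theorem deg_add_deg_le (hl : ∀ v, ¬ A v v) {x y : V} (hne : x ≠ y) (hna : ¬ DAdj A x y) :
    deg A x + deg A y + 4 ≤ 2 * Fintype.card V +
      ((returnConnectors A x y).ncard + (returnConnectors A y x).ncard) := by
  have hx := ncard_connectors_add_ncard_semiconnectors_le hl hne hna
  have hy := ncard_connectors_add_ncard_semiconnectors_le hl hne.symm fun h => hna h.symm
  have hxy := outDeg_add_inDeg (A := A) x y
  have hyx := outDeg_add_inDeg (A := A) y x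
  rw [deg, deg]
  omega

theorem CondA0.connectorCond (hl : ∀ v, ¬ A v v) (h : CondA0 A Y) : ConnectorCond A Y := by
  intro x hx y hy z hz hxy hxz hyz hna
  obtain ⟨hout, hin⟩ := h x hx y hy z hz hxy hxz hyz hna
  have hdeg := deg_add_deg_le hl hxy hna
  refine ⟨fun hAxz => ?_, fun hAzx => ?_⟩
  · have hsum := hout hAxz
    have hle := outDeg_add_inDeg_le hl hxz hAxz
    omega
  · have hsum := hin hAzx
    have hle := outDeg_add_inDeg_le hl hxz.symm hAzx
    omega

end Connectors

section Exits

/-- `l` lists the internal vertices of a walk from `y` to the vertex `v` of `S`, none of which lies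
in `S`. Walks from `S` to `y` are the exits of the reversed digraph `flip A`. -/
def IsExit (A : V → V → Prop) (S : Set V) : V → List V → V → Prop
  | y, [], v => A y v ∧ v ∈ S
  | y, w :: l, v => A y w ∧ w ∉ S ∧ IsExit A S w l v

/-- An exit of least length among the exits from `y`, whatever their ends. -/
def IsShortestExit (A : V → V → Prop) (S : Set V) (y : V) (l : List V) (v : V) : Prop :=
  IsExit A S y l v ∧ ∀ l' v', IsExit A S y l' v' → l.length ≤ l'.length

variable {A : V → V → Prop} {S Y : Set V} {y v w x t : V} {l l₁ l₂ : List V}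

theorem IsExit.mem (h : IsExit A S y l v) : v ∈ S := by
  induction l generalizing y with
  | nil => exact h.2
  | cons w l ih => exact ih h.2.2

theorem IsExit.notMem (h : IsExit A S y l v) : ∀ w ∈ l, w ∉ S := by
  induction l generalizing y with
  | nil => exact fun _ hw => absurd hw List.not_mem_nil
  | cons w l ih => exact List.forall_mem_cons.2 ⟨h.2.1, ih h.2.2⟩

theorem IsExit.isChain (h : IsExit A S y l v) : (y :: (l ++ [v])).IsChain A := by
  induction l generalizing y with
  | nil => exact List.isChain_pair.2 h.1
  | cons w l ih => exact List.isChain_cons_cons.2 ⟨h.1, ih h.2.2⟩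

theorem IsExit.suffix (h : IsExit A S y (l₁ ++ w :: l₂) v) : IsExit A S w l₂ v := by
  induction l₁ generalizing y with
  | nil => exact h.2.2
  | cons a l₁ ih => exact ih h.2.2

theorem IsExit.prefix_concat (h : IsExit A S y (l₁ ++ w :: l₂) v) (hw : A w x) (hx : x ∈ S) :
    IsExit A S y (l₁ ++ [w]) x := by
  induction l₁ generalizing y with
  | nil => exact ⟨h.1, h.2.1, hw, hx⟩
  | cons a l₁ ih => exact ⟨h.1, h.2.1, ih h.2.2⟩

theorem IsExit.exists_nodup (h : IsExit A S y l v) :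
    ∃ l', IsExit A S y l' v ∧ (y :: l').Nodup ∧ l' ⊆ l := by
  induction l generalizing y with
  | nil => exact ⟨[], h, List.nodup_singleton y, List.Subset.refl _⟩
  | cons w l ih =>
    obtain ⟨l', hl', hnd, hsub⟩ := ih h.2.2
    have hexit : IsExit A S y (w :: l') v := ⟨h.1, h.2.1, hl'⟩
    have hsub' : w :: l' ⊆ w :: l := List.cons_subset_cons w hsub
    by_cases hy : y ∈ w :: l'
    · obtain ⟨l₁, l₂, heq⟩ := List.append_of_mem hy
      rw [heq] at hexit hnd hsub'
      exact ⟨l₂, hexit.suffix, hnd.of_append_right,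
        fun a ha => hsub' (List.mem_append_right _ (List.mem_cons_of_mem _ ha))⟩
    · exact ⟨w :: l', hexit, List.nodup_cons.2 ⟨hy, hnd⟩, hsub'⟩

theorem IsExit.exists_isShortestExit (h : IsExit A S y l v) :
    ∃ l' v', IsShortestExit A S y l' v' := by
  obtain ⟨⟨l', v'⟩, hexit, hmin⟩ := exists_minimalFor_of_wellFoundedLT
    (fun p : List V × V => IsExit A S y p.1 p.2) (fun p => p.1.length) ⟨(l, v), h⟩
  exact ⟨l', v', hexit, fun l₂ v₂ h₂ =>
    (le_total _ _).elim id fun hle => hmin (j := (l₂, v₂)) h₂ hle⟩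

theorem IsShortestExit.head?_eq (h : IsShortestExit A S y l v) (ht : t ∈ l) (hyt : A y t) :
    l.head? = some t := by
  obtain ⟨l₁, l₂, rfl⟩ := List.append_of_mem ht
  have hshort : IsExit A S y (t :: l₂) v := ⟨hyt, h.1.notMem t ht, h.1.suffix⟩
  have hlen := h.2 _ _ hshort
  have hnil : l₁ = [] := List.length_eq_zero_iff.1 (by simpa using hlen)
  rw [hnil, List.nil_append, List.head?_cons]

theorem IsShortestExit.getLast?_eq (h : IsShortestExit A S y l v) (ht : t ∈ l) (htx : A t x)
    (hx : x ∈ S) : l.getLast? = some t := by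
  obtain ⟨l₁, l₂, rfl⟩ := List.append_of_mem ht
  have hlen := h.2 _ _ (h.1.prefix_concat htx hx)
  have hnil : l₂ = [] := List.length_eq_zero_iff.1 (by simpa using hlen)
  rw [hnil, List.getLast?_concat]

theorem exists_isExit_of_isChain {p : List V} (hp : (y :: p).IsChain A) (hx : x ∈ p)
    (hxS : x ∈ S) : ∃ l v, IsExit A S y l v := by
  induction p generalizing y with
  | nil => exact absurd hx List.not_mem_nil
  | cons a p ih =>
    obtain ⟨hya, hap⟩ := List.isChain_cons_cons.1 hp
    by_cases ha : a ∈ S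
    · exact ⟨[], a, hya, ha⟩
    · have hxp : x ∈ p := (List.mem_cons.1 hx).resolve_left fun e => ha (e ▸ hxS)
      obtain ⟨l, v, hlv⟩ := ih hap hxp
      exact ⟨a :: l, v, hya, ha, hlv⟩

theorem SetStronglyConnected.exists_isShortestExit (h : SetStronglyConnected A Y) (hx : x ∈ Y)
    (hxS : x ∈ S) (hy : y ∈ Y) (hyS : y ∉ S) : ∃ l v, IsShortestExit A S y l v := by
  have hyx : y ≠ x := fun e => hyS (e ▸ hxS)
  obtain ⟨p, ⟨-, -, hchain⟩, hhead, hlast⟩ := h y hy x hx hyx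
  obtain ⟨p, rfl⟩ := List.head?_eq_some_iff.1 hhead
  have hxp : x ∈ p := (List.mem_cons.1 (List.mem_of_getLast? hlast)).resolve_left hyx.symm
  obtain ⟨l, v, hlv⟩ := exists_isExit_of_isChain hchain hxp hxS
  exact hlv.exists_isShortestExit

theorem SetStronglyConnected.flip (h : SetStronglyConnected A Y) :
    SetStronglyConnected (flip A) Y := by
  intro x hx y hy hxy
  obtain ⟨p, ⟨hne, hnd, hchain⟩, hhead, hlast⟩ := h y hy x hx hxy.symm
  exact ⟨p.reverse, ⟨List.reverse_ne_nil_iff.2 hne, List.nodup_reverse.2 hnd,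
    List.isChain_reverse.2 hchain⟩, List.head?_reverse.trans hlast,
    List.getLast?_reverse.trans hhead⟩

end Exits

section Bypasses

/-- Some path with distinct end-vertices in `S` and internal vertices outside `S` has `y` as an
internal vertex; `m` lists the internal vertices. -/
def HasBypass (A : V → V → Prop) (S : Set V) (y : V) : Prop :=
  ∃ u ∈ S, ∃ v ∈ S, u ≠ v ∧ ∃ m : List V,
    (u :: (m ++ [v])).IsChain A ∧ m.Nodup ∧ (∀ w ∈ m, w ∉ S) ∧ y ∈ m

variable {A : V → V → Prop} {S : Set V} {s t u v x y : V} {l m : List V}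

theorem HasBypass.of_flip (h : HasBypass (flip A) S y) : HasBypass A S y := by
  obtain ⟨u, hu, v, hv, huv, m, hchain, hnd, hm, hym⟩ := h
  refine ⟨v, hv, u, hu, huv.symm, m.reverse, ?_, List.nodup_reverse.2 hnd,
    fun w hw => hm w (List.mem_reverse.1 hw), List.mem_reverse.2 hym⟩
  simpa [flip] using List.isChain_reverse.2 hchain

theorem HasBypass.exists_isBypass {c : List V} (h : HasBypass A {v | v ∈ c} y) :
    ∃ p, IsBypass A c p ∧ y ∈ p := by
  obtain ⟨u, hu, v, hv, huv, m, hchain, hnd, hm, hym⟩ := h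
  have hum : u ∉ m := fun h => hm u h hu
  have hvm : v ∉ m := fun h => hm v h hv
  have hlen := List.length_pos_of_mem hym
  have hnodup : (u :: (m ++ [v])).Nodup := by
    have hne : ∀ a ∈ m, a ≠ v := fun a ha => ne_of_mem_of_not_mem ha hvm
    simpa [List.nodup_append, hum, huv, hnd] using hne
  refine ⟨u :: (m ++ [v]), ⟨⟨List.cons_ne_nil _ _, hnodup, hchain⟩, ?_, by simpa using hu, ?_,
    by simpa using hm⟩, by simp [hym]⟩
  · simp only [List.length_cons, List.length_append, List.length_nil]
    omega
  · rw [← List.cons_append, List.getLast?_concat]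
    rintro b ⟨⟩
    exact hv

theorem IsExit.hasBypass (hl : IsExit A S y l v) (hm : IsExit (flip A) S y m u) (hyS : y ∉ S)
    (huv : u ≠ v) (hdisj : m.Disjoint l) : HasBypass A S y := by
  obtain ⟨l', hl', hlnd, hlsub⟩ := hl.exists_nodup
  obtain ⟨m', hm', hmnd, hmsub⟩ := hm.exists_nodup
  have hchain : ((u :: m'.reverse) ++ [y] ++ (l' ++ [v])).IsChain A := by
    refine List.IsChain.append_overlap ?_ hl'.isChain (List.cons_ne_nil _ _)
    simpa [flip] using List.isChain_reverse.2 hm'.isChain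
  refine ⟨u, hm'.mem, v, hl'.mem, huv, m'.reverse ++ y :: l', by simpa using hchain, ?_, ?_,
    by simp⟩
  · obtain ⟨hym, hmnd⟩ := List.nodup_cons.1 hmnd
    refine (List.nodup_reverse.2 hmnd).append hlnd (List.disjoint_cons_right.2 ⟨by simpa, ?_⟩)
    exact fun a ha => hdisj (hmsub (List.mem_reverse.1 ha)) ∘ @hlsub a
  · simp only [List.mem_append, List.mem_reverse, List.mem_cons]
    rintro w (hw | rfl | hw)
    exacts [hm'.notMem w hw, hyS, hl'.notMem w hw]

theorem IsExit.eq_of_arc (h : IsExit A S y l v) (hno : ¬ HasBypass A S y) (hyS : y ∉ S)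
    (hs : s ∈ S) (hsy : A s y) : v = s :=
  by_contra fun hvs =>
    hno (h.hasBypass (m := []) ⟨hsy, hs⟩ hyS (Ne.symm hvs) (List.disjoint_nil_left l))

theorem IsExit.mem_of_mem_connectors (h : IsExit A S y l v) (hno : ¬ HasBypass A S y)
    (hyS : y ∉ S) (hx : x ∈ S) (hxv : x ≠ v) (ht : t ∈ connectors A x y) (htS : t ∉ S) : t ∈ l :=
  by_contra fun htl =>
    hno (h.hasBypass (m := [t]) ⟨ht.2, htS, ht.1, hx⟩ hyS hxv (List.singleton_disjoint.2 htl))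

end Bypasses

section ArcFromSet

/-- Every exit from `y` ends in the vertex `s`. -/
def ExitsOnlyAt (A : V → V → Prop) (S : Set V) (y s : V) : Prop :=
  ∀ ⦃l v⦄, IsExit A S y l v → v = s

variable {A : V → V → Prop} {S Y : Set V} {s x y z : V} {l : List V}

theorem ExitsOnlyAt.of_arc_or_connector (hE : ExitsOnlyAt A S y s) (hzs : z ≠ s)
    (h : A y z ∨ ∃ t ∈ connectors A y z, t ≠ s) : z ∉ S ∧ ExitsOnlyAt A S z s := by
  obtain hyz | ⟨t, ⟨hyt, htz⟩, hts⟩ := h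
  · have hzS : z ∉ S := fun hzS => hzs (hE (l := []) ⟨hyz, hzS⟩)
    exact ⟨hzS, fun l v hl => hE (l := z :: l) ⟨hyz, hzS, hl⟩⟩
  · have htS : t ∉ S := fun htS => hts (hE (l := []) ⟨hyt, htS⟩)
    have hzS : z ∉ S := fun hzS => hzs (hE (l := [t]) ⟨hyt, htS, htz, hzS⟩)
    exact ⟨hzS, fun l v hl => hE (l := t :: z :: l) ⟨hyt, htS, htz, hzS, hl⟩⟩

theorem ExitsOnlyAt.connectors_subset (hE : ExitsOnlyAt A S y s) (hx : x ∈ S) (hxs : x ≠ s) :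
    connectors A y x ⊆ {t | t = s ∧ A y s} := by
  rintro t ⟨hyt, htx⟩
  by_cases htS : t ∈ S
  · obtain rfl := hE (l := []) ⟨hyt, htS⟩
    exact ⟨rfl, hyt⟩
  · exact absurd (hE (l := [t]) ⟨hyt, htS, htx, hx⟩) hxs

theorem ExitsOnlyAt.returnConnectors_subset (hE : ExitsOnlyAt A S y s) (hno : ¬ HasBypass A S y)
    (hyS : y ∉ S) (hx : x ∈ S) (hxs : x ≠ s) (hl : IsShortestExit A S y l s) :
    returnConnectors A x y ⊆ {s, l.headD s} := by
  rintro t ⟨⟨hxt, hty⟩, hret⟩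
  by_cases htS : t ∈ S
  · exact Or.inl (hl.1.eq_of_arc hno hyS htS hty).symm
  have htl : t ∈ l := hl.1.mem_of_mem_connectors hno hyS hx hxs ⟨hxt, hty⟩ htS
  have hyt : A y t := hret.resolve_right fun htx => by
    obtain ⟨l₁, l₂, rfl⟩ := List.append_of_mem htl
    exact hxs (hE (hl.1.prefix_concat htx hx))
  exact Or.inr (by simp [List.headD_eq_head?_getD, hl.head?_eq htl hyt])

theorem ExitsOnlyAt.ncard_returnConnectors_add_le_two (hE : ExitsOnlyAt A S y s)
    (hno : ¬ HasBypass A S y) (hyS : y ∉ S) (hx : x ∈ S) (hxs : x ≠ s)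
    (hl : IsShortestExit A S y l s) :
    (returnConnectors A x y).ncard + (returnConnectors A y x).ncard ≤ 2 := by
  have hxy := hE.returnConnectors_subset hno hyS hx hxs hl
  have hyx : returnConnectors A y x ⊆ {t | t = s ∧ A y s} :=
    Set.inter_subset_left.trans (hE.connectors_subset hx hxs)
  by_cases hys : A y s
  · obtain rfl : l = [] := List.length_eq_zero_iff.1 (Nat.le_zero.1 (hl.2 [] s ⟨hys, hl.1.mem⟩))
    have hxy_card := Set.ncard_le_ncard (t := {s}) (hxy.trans (by simp))
    have hyx_card := Set.ncard_le_ncard (t := {s}) (hyx.trans fun t ht => ht.1)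
    rw [Set.ncard_singleton] at hxy_card hyx_card
    omega
  · have hyx_empty : returnConnectors A y x = ∅ :=
      Set.eq_empty_of_forall_notMem fun t ht => hys (hyx ht).2
    rw [hyx_empty, Set.ncard_empty]
    exact ncard_le_two_of_subset_pair hxy

theorem hasBypass_of_arc_from (hY : 4 ≤ Y.ncard) (hconn : SetStronglyConnected A Y)
    (hA : ConnectorCond A Y) (hy : y ∈ Y) (hyS : y ∉ S) (hs : s ∈ S) (hsy : A s y) (hx : x ∈ Y)
    (hxS : x ∈ S) (hxs : x ≠ s) : HasBypass A S y := by
  by_contra hno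
  have hE : ExitsOnlyAt A S y s := fun l v hl => hl.eq_of_arc hno hyS hs hsy
  obtain ⟨l, v, hl⟩ := hconn.exists_isShortestExit hx hxS hy hyS
  obtain rfl := hE hl.1
  have hyx : y ≠ x := fun e => hyS (e ▸ hxS)
  have hna : ¬ DAdj A x y := by
    rintro (hAxy | hAyx)
    · exact hxs (hl.1.eq_of_arc hno hyS hxS hAxy).symm
    · exact hxs (hE (l := []) ⟨hAyx, hxS⟩)
  have hcard := hE.ncard_returnConnectors_add_le_two hno hyS hxS hxs hl
  obtain ⟨z, hz, hzx, hzy, hzv⟩ := exists_mem_ne_ne_ne hY x y v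
  have hyz_conn : A y z ∨ ∃ t ∈ connectors A y z, t ≠ v := or_iff_not_imp_left.2 fun h => by
    have := (hA y hy x hx z hz hyx hzy.symm hzx.symm fun h => hna h.symm).1 h
    exact Set.exists_ne_of_one_lt_ncard (by omega) v
  have hzx_conn : A z x ∨ ∃ t ∈ connectors A z x, t ≠ v := or_iff_not_imp_left.2 fun h => by
    have := (hA x hx y hy z hz hyx.symm hzx.symm hzy.symm hna).2 h
    exact Set.exists_ne_of_one_lt_ncard (by omega) v
  exact ((hE.of_arc_or_connector hzv hyz_conn).2.of_arc_or_connector hxs hzx_conn).1 hxS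

end ArcFromSet

section NoArcs

variable {A : V → V → Prop} {S Y : Set V} {q t v x y z : V} {l : List V}

theorem notMem_of_mem_connectors_right (hna : ∀ t ∈ S, ¬ DAdj A y t)
    (ht : t ∈ connectors A x y) : t ∉ S :=
  fun htS => hna t htS (Or.inr ht.2)

theorem notMem_of_mem_connectors_left (hna : ∀ t ∈ S, ¬ DAdj A y t)
    (ht : t ∈ connectors A y x) : t ∉ S :=
  fun htS => hna t htS (Or.inl ht.1)

theorem ncard_connectors_eq_one (hno : ¬ HasBypass A S y) (hyS : y ∉ S)
    (hna : ∀ t ∈ S, ¬ DAdj A y t) (hx : x ∈ S) (hz : z ∈ S) (hxz : x ≠ z)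
    (hin : 0 < (connectors A x y).ncard) (hout : 0 < (connectors A y z).ncard) :
    (connectors A x y).ncard = 1 ∧ (connectors A y z).ncard = 1 := by
  have heq : ∀ a ∈ connectors A x y, ∀ b ∈ connectors A y z, a = b := by
    intro a ha b hb
    have hbS := notMem_of_mem_connectors_left hna hb
    have haS := notMem_of_mem_connectors_right hna ha
    have hmem := IsExit.mem_of_mem_connectors (l := [b]) ⟨hb.1, hbS, hb.2, hz⟩ hno hyS hx hxz
      ha haS
    exact List.mem_singleton.1 hmem
  obtain ⟨a, ha⟩ := Set.nonempty_of_ncard_ne_zero hin.ne'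
  obtain ⟨b, hb⟩ := Set.nonempty_of_ncard_ne_zero hout.ne'
  obtain rfl := heq a ha b hb
  exact ⟨Set.ncard_eq_one.2
      ⟨a, Set.eq_singleton_iff_unique_mem.2 ⟨ha, fun t ht => heq t ht a hb⟩⟩,
    Set.ncard_eq_one.2
      ⟨a, Set.eq_singleton_iff_unique_mem.2 ⟨hb, fun t ht => (heq a ha t ht).symm⟩⟩⟩

theorem ncard_returnConnectors_le_two (hno : ¬ HasBypass A S y) (hyS : y ∉ S)
    (hna : ∀ t ∈ S, ¬ DAdj A y t) (hx : x ∈ S) (hl : IsShortestExit A S y l v) (hxv : x ≠ v) :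
    (returnConnectors A x y).ncard ≤ 2 := by
  refine ncard_le_two_of_subset_pair (a := l.headD v) (b := l.getLastD v) fun t ht => ?_
  have htl : t ∈ l := hl.1.mem_of_mem_connectors hno hyS hx hxv ht.1
    (notMem_of_mem_connectors_right hna ht.1)
  rcases ht.2 with hyt | htx
  · exact Or.inl (by simp [List.headD_eq_head?_getD, hl.head?_eq htl hyt])
  · exact Or.inr (by simp [List.getLastD_eq_getLast?, hl.getLast?_eq htl htx hx])

theorem hasBypass_of_connectors_eq_empty (hconn : SetStronglyConnected A Y)
    (hA : ConnectorCond A Y) (hy : y ∈ Y) (hyS : y ∉ S) (hna : ∀ t ∈ S, ¬ DAdj A y t)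
    (hx : x ∈ Y) (hxS : x ∈ S) (hz : z ∈ Y) (hzS : z ∈ S) (hxz : x ≠ z)
    (hyx : connectors A y x = ∅) (hyz : connectors A y z = ∅) : HasBypass A S y := by
  by_contra hno
  obtain ⟨l, v, hl⟩ := hconn.exists_isShortestExit hx hxS hy hyS
  wlog hxv : x ≠ v generalizing x z
  · exact this hz hzS hx hxS hxz.symm hyz hyx fun hzv => hxz ((not_ne_iff.1 hxv).trans hzv.symm)
  have hlarge := (hA y hy x hx z hz (ne_of_mem_of_not_mem hxS hyS).symm
    (ne_of_mem_of_not_mem hzS hyS).symm hxz (hna x hxS)).1 fun h => hna z hzS (Or.inl h)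
  have hsmall := ncard_returnConnectors_le_two hno hyS hna hxS hl hxv
  rw [returnConnectors, hyx, hyz, Set.empty_inter, Set.ncard_empty] at hlarge
  omega

/-- The walk given by `m` need not be a path: shortening it leaves a vertex of `connectors A y z`
outside it. -/
theorem IsExit.hasBypass_of_length_lt {m : List V} (hm : IsExit (flip A) S y m v) (hvz : v ≠ z)
    (hz : z ∈ S) (hyS : y ∉ S) (hna : ∀ t ∈ S, ¬ DAdj A y t)
    (hlen : m.length < (connectors A y z).ncard) : HasBypass A S y := by
  obtain ⟨t, ht, htm⟩ := exists_mem_notMem_of_length_lt_ncard hlen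
  have hexit : IsExit A S y [t] z := ⟨ht.1, notMem_of_mem_connectors_left hna ht, ht.2, hz⟩
  exact hexit.hasBypass hm hyS hvz (List.disjoint_singleton.2 htm)

theorem exists_isExit_length_le_three (hna : ∀ t ∈ S, ¬ DAdj A y t) (hx : x ∈ S) (hxz : x ≠ z)
    (hqz : q ≠ z) (hyq : A y q ∨ (connectors A y q).Nonempty)
    (hqx : A q x ∨ ∃ t ∈ connectors A q x, t ≠ z) :
    ∃ l v, IsExit A S y l v ∧ v ≠ z ∧ l.length ≤ 3 := by
  have hyS {t : V} (h : A y t) : t ∉ S := fun htS => hna t htS (Or.inl h)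
  by_cases hqS : q ∈ S
  · obtain ⟨b, hyb, hbq⟩ := hyq.resolve_left fun h => hyS h hqS
    exact ⟨[b], q, ⟨hyb, hyS hyb, hbq, hqS⟩, hqz, Nat.le_add_left 1 2⟩
  obtain ⟨l, v, hl, hvz, hlen⟩ : ∃ l v, IsExit A S q l v ∧ v ≠ z ∧ l.length ≤ 1 := by
    obtain hqx | ⟨a, ⟨hqa, hax⟩, haz⟩ := hqx
    · exact ⟨[], x, ⟨hqx, hx⟩, hxz, zero_le_one⟩
    by_cases haS : a ∈ S
    · exact ⟨[], a, ⟨hqa, haS⟩, haz, zero_le_one⟩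
    · exact ⟨[a], x, ⟨hqa, haS, hax, hx⟩, hxz, le_rfl⟩
  obtain hyq | ⟨b, hyb, hbq⟩ := hyq
  · exact ⟨q :: l, v, ⟨hyq, hqS, hl⟩, hvz, by grind⟩
  · exact ⟨b :: q :: l, v, ⟨hyb, hyS hyb, hbq, hqS, hl⟩, hvz, Nat.add_le_add_right hlen 2⟩

theorem hasBypass_of_ncard_returnConnectors_eq_zero (hY : 4 ≤ Y.ncard) (hA : ConnectorCond A Y)
    (hy : y ∈ Y) (hyS : y ∉ S) (hna : ∀ t ∈ S, ¬ DAdj A y t) (hx : x ∈ Y) (hxS : x ∈ S)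
    (hz : z ∈ Y) (hzS : z ∈ S) (hxz : x ≠ z)
    (hR : (returnConnectors A x y).ncard + (returnConnectors A y x).ncard = 0) :
    HasBypass A S y := by
  have hyx : y ≠ x := (ne_of_mem_of_not_mem hxS hyS).symm
  have hyz : y ≠ z := (ne_of_mem_of_not_mem hzS hyS).symm
  obtain ⟨q, hq, hqx, hqy, hqz⟩ := exists_mem_ne_ne_ne hY x y z
  have hyz_card : 4 ≤ (connectors A y z).ncard := by
    have := (hA y hy x hx z hz hyx hyz hxz (hna x hxS)).1 fun h => hna z hzS (Or.inl h)
    omega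
  have hqy_conn : A q y ∨ (connectors A q y).Nonempty := or_iff_not_imp_left.2 fun h => by
    have := (hA y hy x hx q hq hyx hqy.symm hqx.symm (hna x hxS)).2 h
    exact Set.nonempty_of_ncard_ne_zero (by omega)
  have hxq_conn : A x q ∨ ∃ t ∈ connectors A x q, t ≠ z := or_iff_not_imp_left.2 fun h => by
    have := (hA x hx y hy q hq hyx.symm hqx.symm hqy.symm fun h => hna x hxS h.symm).1 h
    exact Set.exists_ne_of_one_lt_ncard (by omega) z
  obtain ⟨m, v, hm, hvz, hlen⟩ := exists_isExit_length_le_three (A := flip A)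
    (fun t ht h => hna t ht h.symm) hxS hxz hqz (by rwa [connectors_flip])
    (by rwa [connectors_flip])
  exact hm.hasBypass_of_length_lt hvz hzS hyS hna (by omega)

theorem ConnectorCond.four_le_ncard_connectors [Finite V] (hA : ConnectorCond A Y) (hy : y ∈ Y)
    (hyS : y ∉ S) (hna : ∀ t ∈ S, ¬ DAdj A y t) (hx : x ∈ Y) (hxS : x ∈ S) (hz : z ∈ Y)
    (hzS : z ∈ S) (hxz : x ≠ z) :
    4 ≤ (connectors A x y).ncard + (connectors A y x).ncard + (connectors A y z).ncard ∧
    4 ≤ (connectors A x y).ncard + (connectors A y x).ncard + (connectors A z y).ncard := by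
  have hle (p q : V) : (returnConnectors A p q).ncard ≤ (connectors A p q).ncard :=
    Set.ncard_le_ncard Set.inter_subset_left
  obtain ⟨hout, hin⟩ := hA y hy x hx z hz (ne_of_mem_of_not_mem hxS hyS).symm
    (ne_of_mem_of_not_mem hzS hyS).symm hxz (hna x hxS)
  have hyz_card := hout fun h => hna z hzS (Or.inl h)
  have hzy_card := hin fun h => hna z hzS (Or.inr h)
  have hxy_le := hle x y
  have hyx_le := hle y x
  constructor <;> omega

theorem hasBypass_of_forall_not_dAdj [Finite V] (hY : 4 ≤ Y.ncard)
    (hconn : SetStronglyConnected A Y) (hA : ConnectorCond A Y) (hy : y ∈ Y) (hyS : y ∉ S)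
    (hna : ∀ t ∈ S, ¬ DAdj A y t) (hx : x ∈ Y) (hxS : x ∈ S) (hz : z ∈ Y) (hzS : z ∈ S)
    (hxz : x ≠ z) : HasBypass A S y := by
  by_contra hno
  have hempty {p q : V} (h : (connectors A p q).ncard = 0) : connectors A p q = ∅ :=
    (Set.ncard_eq_zero).1 h
  have hout : 0 < (connectors A y x).ncard + (connectors A y z).ncard := by
    by_contra! h
    exact hno (hasBypass_of_connectors_eq_empty hconn hA hy hyS hna hx hxS hz hzS hxz
      (hempty (by omega)) (hempty (by omega)))
  have hin : 0 < (connectors A x y).ncard + (connectors A z y).ncard := by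
    by_contra! h
    refine hno (hasBypass_of_connectors_eq_empty hconn.flip hA.flip hy hyS
      (fun t ht h => hna t ht h.symm) hx hxS hz hzS hxz ?_ ?_).of_flip <;>
    exact (connectors_flip _ _).trans (hempty (by omega))
  have hjoined {p r : V} (hp : p ∈ Y) (hpS : p ∈ S) (hr : r ∈ Y) (hrS : r ∈ S) (hpr : p ≠ r) :
      0 < (connectors A p y).ncard + (connectors A y p).ncard := by
    by_contra! h
    refine hno (hasBypass_of_ncard_returnConnectors_eq_zero hY hA hy hyS hna hp hpS hr hrS hpr ?_)
    rw [returnConnectors, returnConnectors, hempty (p := p) (by omega),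
      hempty (p := y) (by omega), Set.empty_inter, Set.empty_inter, Set.ncard_empty]
  have hx_joined := hjoined hx hxS hz hzS hxz
  have hz_joined := hjoined hz hzS hx hxS hxz.symm
  have hx_card := hA.four_le_ncard_connectors hy hyS hna hx hxS hz hzS hxz
  have hz_card := hA.four_le_ncard_connectors hy hyS hna hz hzS hx hxS hxz.symm
  have hthrough : 0 < (connectors A x y).ncard ∧ 0 < (connectors A y z).ncard ∨
      0 < (connectors A z y).ncard ∧ 0 < (connectors A y x).ncard := by omega
  -- Two singletons force the other two connector sets to be larger than singletons.
  rcases hthrough with ⟨hxy, hyz⟩ | ⟨hzy, hyx⟩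
  · have hxz_single := ncard_connectors_eq_one hno hyS hna hxS hzS hxz hxy hyz
    have hzx_single := ncard_connectors_eq_one hno hyS hna hzS hxS hxz.symm (by omega) (by omega)
    omega
  · have hzx_single := ncard_connectors_eq_one hno hyS hna hzS hxS hxz.symm hzy hyx
    have hxz_single := ncard_connectors_eq_one hno hyS hna hxS hzS hxz (by omega) (by omega)
    omega

end NoArcs

theorem bypass_exists_condA0_general [Fintype V] {A : V → V → Prop} (hl : ∀ v, ¬ A v v)
    {Y : Set V} (hY : 4 ≤ Y.ncard) (hconn : SetStronglyConnected A Y) (hA0 : CondA0 A Y)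
    {S : Set V} (hS : 2 ≤ (S ∩ Y).ncard) {y : V} (hy : y ∈ Y) (hyS : y ∉ S) :
    HasBypass A S y := by
  have hA := hA0.connectorCond hl
  by_cases hna : ∀ t ∈ S, ¬ DAdj A y t
  · obtain ⟨x, ⟨hxS, hx⟩, z, ⟨hzS, hz⟩, hxz⟩ := (Set.one_lt_ncard).1 hS
    exact hasBypass_of_forall_not_dAdj hY hconn hA hy hyS hna hx hxS hz hzS hxz
  · push Not at hna
    obtain ⟨s, hs, hadj⟩ := hna
    obtain ⟨x, ⟨hxS, hx⟩, hxs⟩ := Set.exists_ne_of_one_lt_ncard hS s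
    rcases hadj with hys | hsy
    · exact (hasBypass_of_arc_from hY hconn.flip hA.flip hy hyS hs hys hx hxS hxs).of_flip
    · exact hasBypass_of_arc_from hY hconn hA hy hyS hs hsy hx hxS hxs

/-- Lemma 3.11. -/
theorem bypass_exists_condA0 [Fintype V] (A : V → V → Prop)
    (hloops : ∀ v, ¬ A v v)
    (Y : Set V) (hY : 4 ≤ Y.ncard)
    (hconn : SetStronglyConnected A Y) (hA0 : CondA0 A Y)
    (c : List V) (hc : IsCycleOn A c) (hnonham : ∃ v : V, v ∉ c)
    (hYc : 2 ≤ ({v | v ∈ c} ∩ Y).ncard) :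
    ∀ y ∈ Y, y ∉ c → ∃ p : List V, IsBypass A c p ∧ y ∈ p :=
  fun _ hy hyc => (bypass_exists_condA0_general hloops hY hconn hA0 hYc hy hyc).exists_isBypass
end

section
/- Let D be a strongly connected digraph of order n ≥ 3 and let z_0 be some vertex of D. If d(x) + d(y) ≥ 2n − 1 for any two nonadjacent vertices x, y ∈ V(D) ∖ {z_0}, then D is Hamiltonian or contains a directed cycle of length n − 1. -/
/-!
Basic definitions for finite digraphs (no loops, no multiple arcs), where the arc
relation is `A : V → V → Prop`.  Paths and cycles are given as lists of (distinct)
vertices.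
-/

variable {V : Type*}

/-!
Suppose every cycle has at most `n - 2` vertices, and let `C` be a longest cycle, avoiding `z` if
some longest cycle does. A *detour* is a walk between two vertices of `C` through outside vertices,
meeting `z` at most once and some other vertex at least once.

If `C` has no detour, take `u ∉ C` and `y ∈ C`, both different from `z`: then `u` has no neighbour
on `C`, and all paths of length two between `u` and `y` pass through `z`.

Otherwise choose `C` and a detour from `b ∈ C` to `a ∈ C` for which the segment `s` of `C` strictly
between `b` and `a` is as short as possible. Let `p` be the complementary segment, from `a` to `b`,
and let `u ≠ z` be a vertex of the detour. By minimality no detour joins `b` to `s` or `s` to `a`,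
so `u` is not adjacent to `s`; by maximality of `C`, `u` cannot be inserted into `p`. A longest path
`r` from `a` to `b` inside `C` with `p ⊆ r` misses some `y ∈ s` other than `z`, since otherwise `r`
and the detour would close up to a better cycle than `C`; and `y` cannot be inserted into `r`.

In both cases `u` and `y` are nonadjacent, and counting arcs inside and outside `C` gives
`d(u) + d(y) ≤ 2n - 2`.
-/

theorem IsPathFromTo.nodup {A : V → V → Prop} {l : List V} {a b : V} (h : IsPathFromTo A l a b) :
    l.Nodup :=
  h.1.2.1

theorem IsPathFromTo.isChain {A : V → V → Prop} {l : List V} {a b : V}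
    (h : IsPathFromTo A l a b) : l.IsChain A :=
  h.1.2.2

theorem StronglyConnected.flip {A : V → V → Prop} (h : StronglyConnected A) :
    StronglyConnected (flip A) := by
  intro x y hxy
  obtain ⟨l, ⟨hne, hnd, hch⟩, hhead, hlast⟩ := h y x hxy.symm
  exact ⟨l.reverse, ⟨by simpa using hne, List.nodup_reverse.2 hnd, List.isChain_reverse.2 hch⟩,
    by simpa using hlast, by simpa using hhead⟩

/-! ### Lists -/

theorem exists_eq_append_of_duplicate {l : List V} {v : V} (h : l.Duplicate v) :
    ∃ l₁ l₂ l₃, l = l₁ ++ v :: (l₂ ++ v :: l₃) := by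
  induction h with
  | cons_mem h =>
    obtain ⟨l₂, l₃, rfl⟩ := List.append_of_mem h
    exact ⟨[], l₂, l₃, rfl⟩
  | @cons_duplicate w _ _ ih =>
    obtain ⟨l₁, l₂, l₃, rfl⟩ := ih
    exact ⟨w :: l₁, l₂, l₃, rfl⟩

theorem not_duplicate_append {l₁ l₂ : List V} {z : V} (h₁ : z ∉ l₁) (h₂ : ¬ l₂.Duplicate z) :
    ¬ (l₁ ++ l₂).Duplicate z := by
  classical
  rw [List.duplicate_iff_two_le_count] at h₂ ⊢
  rwa [List.count_append, List.count_eq_zero.2 h₁, zero_add]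

theorem exists_isRotated_append_of_mem {l : List V} {x y : V} (hx : x ∈ l) (hy : y ∈ l) :
    ∃ p s, l.IsRotated (p ++ s) ∧ p.head? = some y ∧ p.getLast? = some x := by
  obtain ⟨l₁, l₂, rfl⟩ := List.append_of_mem hx
  have hrot : (l₁ ++ x :: l₂).IsRotated (l₂ ++ l₁ ++ [x]) := by
    simpa using List.isRotated_append (l := l₁ ++ [x]) (l' := l₂)
  obtain ⟨s, p, hsp⟩ := List.append_of_mem (hrot.mem_iff.1 hy)
  refine ⟨y :: p, s, ?_, rfl, ?_⟩
  · exact (hsp ▸ hrot).trans List.isRotated_append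
  · rw [← List.getLast?_append_of_ne_nil s (List.cons_ne_nil y p), ← hsp, List.getLast?_concat]

theorem length_le_of_nodup_of_subset {l l' : List V} (h : l.Nodup) (hl : l ⊆ l') :
    l.length ≤ l'.length :=
  (List.subperm_of_subset h hl).length_le

theorem exists_notMem_of_length_lt_card {l : List V} (h : l.length < Nat.card V) :
    ∃ v, v ∉ l := by
  classical
  by_contra! hall
  have huniv : (l.toFinset : Set V) = Set.univ := by simpa [Set.eq_univ_iff_forall] using hall
  have := l.toFinset_card_le
  rw [← Set.ncard_coe_finset, huniv, Set.ncard_univ] at this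
  omega

theorem ncard_setOf_mem_of_nodup {l : List V} (h : l.Nodup) : {v | v ∈ l}.ncard = l.length := by
  classical
  rw [← List.coe_toFinset, Set.ncard_coe_finset, List.toFinset_card_of_nodup h]

/-! ### Insertion into paths -/

theorem canInsert_cons_cons {A : V → V → Prop} {l : List V} {v w y : V} :
    CanInsert A (v :: w :: l) y ↔ (A v y ∧ A y w) ∨ CanInsert A (w :: l) y := by
  constructor
  · rintro ⟨_ | i, hi, hin, hout⟩
    · exact Or.inl ⟨hin, hout⟩
    · exact Or.inr ⟨i, Nat.lt_of_succ_lt_succ hi, hin, hout⟩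
  · rintro (⟨hin, hout⟩ | ⟨i, hi, hin, hout⟩)
    · exact ⟨0, by simp, hin, hout⟩
    · exact ⟨i + 1, Nat.succ_lt_succ hi, hin, hout⟩

namespace CanInsert

variable {A : V → V → Prop} {l : List V} {a b y : V}

theorem append_right (h : CanInsert A l y) (l' : List V) : CanInsert A (l ++ l') y := by
  obtain ⟨i, hi, hin, hout⟩ := h
  refine ⟨i, by simp; omega, ?_, ?_⟩
  · rwa [List.getElem_append_left]
  · rwa [List.getElem_append_left]

theorem exists_insert (h : CanInsert A l y) :
    ∃ l' : List V, l'.Perm (y :: l) ∧ l'.head? = l.head? ∧ l'.getLast? = l.getLast? ∧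
      (l.IsChain A → l'.IsChain A) := by
  induction l with
  | nil => simp [CanInsert] at h
  | cons v l ih =>
    rcases l with _ | ⟨w, l⟩
    · simp [CanInsert] at h
    rcases canInsert_cons_cons.1 h with ⟨hin, hout⟩ | h
    · refine ⟨v :: y :: w :: l, List.Perm.swap .., rfl, by simp, fun hch => ?_⟩
      simp only [List.isChain_cons_cons] at hch ⊢
      exact ⟨hin, hout, hch.2⟩
    · obtain ⟨l', hperm, hhead, hlast, hchain⟩ := ih h
      refine ⟨v :: l', (hperm.cons v).trans (List.Perm.swap ..), rfl, ?_, fun hch => ?_⟩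
      · rw [List.getLast?_cons, List.getLast?_cons, hlast]
      · rw [List.isChain_cons] at hch ⊢
        exact ⟨hhead ▸ hch.1, hchain hch.2⟩

theorem exists_isPathFromTo (h : CanInsert A l y) (hl : IsPathFromTo A l a b) (hy : y ∉ l) :
    ∃ l', IsPathFromTo A l' a b ∧ l'.Perm (y :: l) := by
  obtain ⟨l', hperm, hhead, hlast, hchain⟩ := h.exists_insert
  refine ⟨l', ⟨⟨?_, ?_, hchain hl.isChain⟩, hhead.trans hl.2.1, hlast.trans hl.2.2⟩, hperm⟩
  · rintro rfl
    simp at hperm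
  · exact hperm.nodup_iff.2 (List.nodup_cons.2 ⟨hy, hl.nodup⟩)

theorem exists_isCycleOn (h : CanInsert A l y) (hl : IsCycleOn A l) (hy : y ∉ l) :
    ∃ l', IsCycleOn A l' ∧ l'.length = l.length + 1 := by
  obtain ⟨l', hperm, hhead, hlast, hchain⟩ := h.exists_insert
  obtain ⟨htwo, hnd, hch, hclose⟩ := hl
  have hlen : l'.length = l.length + 1 := hperm.length_eq
  refine ⟨l', ⟨by omega, hperm.nodup_iff.2 (List.nodup_cons.2 ⟨hy, hnd⟩), hchain hch, ?_⟩, hlen⟩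
  rwa [hhead, hlast]

end CanInsert

/-! ### Degrees into sets -/

section Degrees

variable {A : V → V → Prop} {x y : V} {S T U : Set V}

/-- The number of paths of length two from `x` to `y` whose middle vertex lies in `S`. -/
noncomputable def twoPathCountOn (A : V → V → Prop) (x y : V) (S : Set V) : ℕ :=
  {w ∈ S | A x w ∧ A w y}.ncard

theorem twoPathCountOn_flip : twoPathCountOn (flip A) x y S = twoPathCountOn A y x S := by
  simp only [twoPathCountOn, flip, and_comm]

theorem deg_eq_degOn_univ : deg A x = degOn A x Set.univ := by
  simp [deg, degOn, outDeg, inDeg, outDegOn, inDegOn]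

theorem outDegOn_eq_zero (h : ∀ v ∈ S, ¬ A x v) : outDegOn A x S = 0 := by
  rw [outDegOn, Set.sep_eq_empty_iff_mem_false.2 h, Set.ncard_empty]

theorem degOn_eq_zero (hout : ∀ v ∈ S, ¬ A x v) (hin : ∀ v ∈ S, ¬ A v x) : degOn A x S = 0 :=
  Nat.add_eq_zero_iff.2 ⟨outDegOn_eq_zero hout, outDegOn_eq_zero (A := flip A) hin⟩

theorem outDegOn_singleton_le_one (v : V) : outDegOn A x {v} ≤ 1 :=
  (Set.ncard_le_ncard (Set.sep_subset ..)).trans (Set.ncard_singleton v).le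

theorem inDegOn_singleton_le_one (v : V) : inDegOn A x {v} ≤ 1 :=
  outDegOn_singleton_le_one (A := flip A) v

theorem outDegOn_le_add [Finite V] (h : S ⊆ T ∪ U) :
    outDegOn A x S ≤ outDegOn A x T + outDegOn A x U := by
  refine (Set.ncard_le_ncard ?_).trans (Set.ncard_union_le ..)
  exact fun v hv => (h hv.1).imp (⟨·, hv.2⟩) (⟨·, hv.2⟩)

theorem degOn_le_add [Finite V] (h : S ⊆ T ∪ U) : degOn A x S ≤ degOn A x T + degOn A x U := by
  have hout := outDegOn_le_add (A := A) (x := x) h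
  have hin : inDegOn A x S ≤ inDegOn A x T + inDegOn A x U := outDegOn_le_add (A := flip A) h
  simp only [degOn]
  omega

theorem outDegOn_add_one_le_ncard (hS : S.Finite) (hx : x ∈ S) (hxx : ¬ A x x) :
    outDegOn A x S + 1 ≤ S.ncard :=
  Set.ncard_lt_ncard
    ((Set.ssubset_iff_of_subset (Set.sep_subset ..)).2 ⟨x, hx, fun h => hxx h.2⟩) hS

theorem degOn_add_two_le (hS : S.Finite) (hx : x ∈ S) (hxx : ¬ A x x) :
    degOn A x S + 2 ≤ 2 * S.ncard := by
  have hout := outDegOn_add_one_le_ncard hS hx hxx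
  have hin : inDegOn A x S + 1 ≤ S.ncard := outDegOn_add_one_le_ncard (A := flip A) hS hx hxx
  simp only [degOn]
  omega

theorem outDegOn_add_inDegOn_le (hS : S.Finite) (hx : x ∈ S) (hxx : ¬ A x x) (hxy : ¬ A x y) :
    outDegOn A x S + inDegOn A y S + 1 ≤ S.ncard + twoPathCountOn A x y S := by
  have hunion : ({v ∈ S | A x v} ∪ {v ∈ S | A v y}).ncard + 1 ≤ S.ncard := by
    refine Set.ncard_lt_ncard ((Set.ssubset_iff_of_subset ?_).2 ⟨x, hx, ?_⟩) hS
    · exact Set.union_subset (Set.sep_subset ..) (Set.sep_subset ..)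
    · simp [hxx, hxy]
  have hinter : {v ∈ S | A x v} ∩ {v ∈ S | A v y} = {v ∈ S | A x v ∧ A v y} := Set.sep_and.symm
  have := Set.ncard_union_add_ncard_inter {v ∈ S | A x v} {v ∈ S | A v y} (hS.sep _) (hS.sep _)
  rw [hinter] at this
  simp only [outDegOn, inDegOn, twoPathCountOn]
  omega

theorem degOn_add_degOn_add_two_le (hS : S.Finite) (hx : x ∈ S) (hxx : ¬ A x x) (hxy : ¬ A x y)
    (hyx : ¬ A y x) : degOn A x S + degOn A y S + 2 ≤
      2 * S.ncard + twoPathCountOn A x y S + twoPathCountOn A y x S := by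
  have hto := outDegOn_add_inDegOn_le hS hx hxx hxy
  have hfrom := outDegOn_add_inDegOn_le (A := flip A) hS hx hxx hyx
  rw [twoPathCountOn_flip] at hfrom
  have hout : outDegOn (flip A) x S = inDegOn A x S := rfl
  have hin : inDegOn (flip A) y S = outDegOn A y S := rfl
  simp only [degOn]
  omega

theorem deg_add_deg_add_two_le [Finite V] (hx : x ∉ S) (hxx : ¬ A x x) (hxy : ¬ A x y)
    (hyx : ¬ A y x) : deg A x + deg A y + 2 ≤ degOn A x S + degOn A y S + 2 * Sᶜ.ncard +
      twoPathCountOn A x y Sᶜ + twoPathCountOn A y x Sᶜ := by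
  have hsplit (v : V) : deg A v ≤ degOn A v S + degOn A v Sᶜ :=
    deg_eq_degOn_univ.trans_le (degOn_le_add (Set.union_compl_self S).ge)
  have := hsplit x
  have := hsplit y
  have := degOn_add_degOn_add_two_le Sᶜ.toFinite hx hxx hxy hyx
  omega

theorem inDegOn_add_outDegOn_singleton_le_one {v w : V} (h : ¬ (A v x ∧ A x w)) :
    inDegOn A x {v} + outDegOn A x {w} ≤ 1 := by
  by_cases hv : A v x
  · have hw : outDegOn A x {w} = 0 := outDegOn_eq_zero (by simpa using fun hw => h ⟨hv, hw⟩)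
    have := inDegOn_singleton_le_one (A := A) (x := x) v
    omega
  · have hv : inDegOn A x {v} = 0 := outDegOn_eq_zero (A := flip A) (by simpa [flip] using hv)
    have := outDegOn_singleton_le_one (A := A) (x := x) w
    omega

theorem degOn_add_one_le_of_not_canInsert [Finite V] {l : List V} {a b : V}
    (ha : l.head? = some a) (hb : l.getLast? = some b) (h : ¬ CanInsert A l x) :
    degOn A x {v | v ∈ l} + 1 ≤ l.length + inDegOn A x {b} + outDegOn A x {a} := by
  induction l generalizing a with
  | nil => simp at ha
  | cons c l ih =>
    obtain rfl : c = a := by simpa using ha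
    rcases l with _ | ⟨d, l⟩
    · obtain rfl : c = b := by simpa using hb
      simp only [List.mem_singleton, Set.ofPred_eq_eq_singleton, List.length_singleton, degOn]
      omega
    · rw [canInsert_cons_cons, not_or] at h
      have htail := ih rfl (by simpa using hb) h.2
      have hstep := inDegOn_add_outDegOn_singleton_le_one h.1
      have hsplit : degOn A x {v | v ∈ c :: d :: l} ≤ degOn A x {c} + degOn A x {v | v ∈ d :: l} :=
        degOn_le_add fun v hv => List.mem_cons.1 hv
      rw [List.length_cons]
      simp only [degOn] at hsplit htail ⊢
      omega

end Degrees

/-! ### Cycles -/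

section Cycles

variable {A : V → V → Prop} {z a b : V} {c c' p s l : List V}

theorem isCycleOn_iff_cycle_chain :
    IsCycleOn A l ↔ 2 ≤ l.length ∧ l.Nodup ∧ Cycle.Chain A (l : Cycle V) := by
  rcases l with _ | ⟨v, l⟩
  · simp [IsCycleOn]
  · rw [Cycle.chain_coe_cons, ← List.cons_append, List.isChain_append]
    simp only [IsCycleOn, List.isChain_singleton, true_and, List.head?_cons, Option.mem_some_iff,
      forall_eq']
    rfl

theorem IsCycleOn.of_isRotated (h : IsCycleOn A c) (hrot : c.IsRotated c') : IsCycleOn A c' := by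
  rw [isCycleOn_iff_cycle_chain] at h ⊢
  rwa [← hrot.perm.length_eq, ← hrot.nodup_iff, ← Cycle.coe_eq_coe.2 hrot]

theorem IsCycleOn.isPathFromTo_left (h : IsCycleOn A (p ++ s)) (ha : p.head? = some a)
    (hb : p.getLast? = some b) : IsPathFromTo A p a b := by
  refine ⟨⟨?_, h.2.1.of_append_left, List.IsChain.left_of_append h.2.2.1⟩, ha, hb⟩
  rintro rfl
  simp at ha

theorem StronglyConnected.exists_isCycleOn [Nontrivial V] (hconn : StronglyConnected A) :
    ∃ c, IsCycleOn A c := by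
  obtain ⟨x, y, hxy⟩ := exists_pair_ne V
  obtain ⟨l, ⟨-, hnd, hch⟩, hx, hy⟩ := hconn x y hxy
  rcases l with _ | ⟨x', _ | ⟨v, l⟩⟩
  · simp at hx
  · simp_all
  obtain rfl : x' = x := by simpa using hx
  obtain ⟨hvx, -⟩ : x' ≠ v ∧ x' ∉ l := by simpa using (List.nodup_cons.1 hnd).1
  have hxv : A x' v := (List.isChain_cons_cons.1 hch).1
  obtain ⟨c, ⟨-, hcnd, hcch⟩, hcv, hcx⟩ := hconn v x' hvx.symm
  refine ⟨c, ?_, hcnd, hcch, by simpa [hcv, hcx] using hxv⟩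
  rcases c with _ | ⟨v₁, _ | ⟨v₂, c⟩⟩ <;> simp_all

/-- A longest cycle which avoids `z` whenever some longest cycle does. -/
structure IsOptimalCycle (A : V → V → Prop) (z : V) (c : List V) : Prop where
  isCycleOn : IsCycleOn A c
  length_le : ∀ c', IsCycleOn A c' → c'.length ≤ c.length
  mem_of_length_eq : ∀ c', IsCycleOn A c' → c'.length = c.length → z ∈ c → z ∈ c'

theorem exists_isOptimalCycle [Finite V] (z : V) (h : ∃ c, IsCycleOn A c) :
    ∃ c, IsOptimalCycle A z c := by
  have hfin : {c | IsCycleOn A c}.Finite := by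
    refine (List.finite_length_le V (Nat.card V)).subset fun c hc => ?_
    exact (ncard_setOf_mem_of_nodup hc.2.1).symm.trans_le (Set.ncard_le_card _)
  obtain ⟨c, hc, hmax⟩ := hfin.exists_maximalFor (fun c => toLex (c.length, z ∉ c)) _ h
  have hle : ∀ c', IsCycleOn A c' →
      c'.length < c.length ∨ c'.length = c.length ∧ (z ∉ c' → z ∉ c) := fun c' hc' =>
    Prod.Lex.toLex_le_toLex.1 ((le_total _ _).elim id (hmax hc'))
  refine ⟨c, hc, fun c' hc' => ?_, fun c' hc' hlen => ?_⟩
  · have := hle c' hc'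
    omega
  · have := hle c' hc'
    exact not_imp_not.1 (this.resolve_left hlen.not_lt).2

theorem IsOptimalCycle.of_isRotated (h : IsOptimalCycle A z c) (hrot : c.IsRotated c') :
    IsOptimalCycle A z c' where
  isCycleOn := h.isCycleOn.of_isRotated hrot
  length_le := by simpa only [← hrot.perm.length_eq] using h.length_le
  mem_of_length_eq := by
    simpa only [← hrot.perm.length_eq, ← hrot.mem_iff] using h.mem_of_length_eq

theorem IsOptimalCycle.not_canInsert {u : V} (h : IsOptimalCycle A z c) (hu : u ∉ c) :
    ¬ CanInsert A c u := by
  intro hins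
  obtain ⟨c', hc', hlen⟩ := hins.exists_isCycleOn h.isCycleOn hu
  have := h.length_le c' hc'
  omega

end Cycles

/-! ### Walks and detours -/

section Walks

variable {A : V → V → Prop} {z u x y : V} {c c' w : List V}

/-- A walk from `x` to `y`, possibly with repetitions, none of whose interior vertices, listed in
`w`, lies on `c`. The ends `x` and `y` are arbitrary. -/
def IsWalkAvoiding (A : V → V → Prop) (c : List V) (x : V) (w : List V) (y : V) : Prop :=
  (x :: (w ++ [y])).IsChain A ∧ ∀ v ∈ w, v ∉ c

theorem isWalkAvoiding_nil : IsWalkAvoiding A c x [] y ↔ A x y := by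
  simp [IsWalkAvoiding]

theorem isWalkAvoiding_append_cons {w₁ w₂ : List V} :
    IsWalkAvoiding A c x (w₁ ++ u :: w₂) y ↔
      IsWalkAvoiding A c x w₁ u ∧ u ∉ c ∧ IsWalkAvoiding A c u w₂ y := by
  have hlist : x :: ((w₁ ++ u :: w₂) ++ [y]) = (x :: w₁) ++ u :: (w₂ ++ [y]) := by simp
  rw [IsWalkAvoiding, hlist, List.isChain_split, List.cons_append]
  simp only [IsWalkAvoiding, List.mem_append, List.mem_cons, or_imp, forall_and, forall_eq]
  tauto

theorem isWalkAvoiding_cons :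
    IsWalkAvoiding A c x (u :: w) y ↔ A x u ∧ u ∉ c ∧ IsWalkAvoiding A c u w y := by
  rw [← isWalkAvoiding_nil (A := A) (c := c) (x := x) (y := u)]
  exact isWalkAvoiding_append_cons (w₁ := [])

theorem IsWalkAvoiding.flip (h : IsWalkAvoiding A c x w y) :
    IsWalkAvoiding (flip A) c y w.reverse x := by
  refine ⟨?_, by simpa using h.2⟩
  simpa using List.isChain_reverse (R := _root_.flip A).2 h.1

theorem IsWalkAvoiding.congr (h : IsWalkAvoiding A c x w y) (hc : ∀ v, v ∈ c ↔ v ∈ c') :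
    IsWalkAvoiding A c' x w y := by
  simpa only [IsWalkAvoiding, hc] using h

theorem StronglyConnected.exists_isWalkAvoiding (hconn : StronglyConnected A) (hu : u ∉ c)
    (hy : y ∈ c) : ∃ x ∈ c, ∃ w, IsWalkAvoiding A c u w x ∧ w.Nodup := by
  classical
  obtain ⟨l, ⟨-, hnd, hch⟩, hhead, hlast⟩ := hconn u y (by rintro rfl; exact hu hy)
  obtain ⟨x, t, t', ht, hx, rfl, -⟩ :=
    List.exists_of_eraseP (p := (· ∈ c)) (List.mem_of_getLast? hlast) (by simpa using hy)
  simp only [decide_eq_true_eq] at ht hx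
  rcases t with _ | ⟨u', w⟩
  · obtain rfl : x = u := by simpa using hhead
    exact absurd hx hu
  obtain rfl : u' = u := by simpa using hhead
  refine ⟨x, hx, w, ⟨(List.isChain_split.1 hch).1, ?_⟩, (List.nodup_cons.1 hnd.of_append_left).2⟩
  exact fun v hv => ht v (List.mem_cons_of_mem _ hv)

/-- Every walk from `x` to `y` with interior outside `c` passes through `z`. -/
def Separates (A : V → V → Prop) (z : V) (c : List V) (x y : V) : Prop :=
  ∀ w, IsWalkAvoiding A c x w y → z ∈ w

theorem Separates.flip (h : Separates A z c x y) : Separates (flip A) z c y x := fun _ hw =>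
  List.mem_reverse.1 (h _ hw.flip)

theorem Separates.not_arc (h : Separates A z c x y) : ¬ A x y := fun hxy => by
  simpa using h [] (isWalkAvoiding_nil.2 hxy)

theorem Separates.eq_of_arc_of_arc {v : V} (h : Separates A z c x y) (hv : v ∉ c) (hxv : A x v)
    (hvy : A v y) : v = z := by
  have := h [v] (isWalkAvoiding_cons.2 ⟨hxv, hv, isWalkAvoiding_nil.2 hvy⟩)
  exact (List.mem_singleton.1 this).symm

theorem Separates.twoPathCountOn_le_one (h : Separates A z c x y) :
    twoPathCountOn A x y {v | v ∈ c}ᶜ ≤ 1 := by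
  have hsub : {v ∈ {v | v ∈ c}ᶜ | A x v ∧ A v y} ⊆ {z} := fun v hv =>
    h.eq_of_arc_of_arc hv.1 hv.2.1 hv.2.2
  exact (Set.ncard_le_ncard hsub).trans (Set.ncard_singleton z).le

/-- A walk from `x` to `y` with interior `w` outside `c` that passes through `z` at most once, and
through some vertex other than `z`. -/
structure IsDetour (A : V → V → Prop) (z : V) (c : List V) (x : V) (w : List V) (y : V) :
    Prop where
  isWalkAvoiding : IsWalkAvoiding A c x w y
  not_duplicate : ¬ w.Duplicate z
  exists_ne : ∃ u ∈ w, u ≠ z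

namespace IsDetour

theorem flip (h : IsDetour A z c x w y) : IsDetour (flip A) z c y w.reverse x where
  isWalkAvoiding := h.isWalkAvoiding.flip
  not_duplicate := by
    simpa [List.duplicate_iff_sublist, ← List.reverse_sublist (l₂ := w)] using h.not_duplicate
  exists_ne := by simpa using h.exists_ne

theorem congr (h : IsDetour A z c x w y) (hc : ∀ v, v ∈ c ↔ v ∈ c') : IsDetour A z c' x w y :=
  { h with isWalkAvoiding := h.isWalkAvoiding.congr hc }

theorem ne_nil (h : IsDetour A z c x w y) : w ≠ [] := by
  rintro rfl
  simpa using h.exists_ne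

theorem exists_nodup (h : IsDetour A z c x w y) : ∃ w', IsDetour A z c x w' y ∧ w'.Nodup := by
  obtain ⟨w', h', hmin⟩ :=
    exists_minimalFor_of_wellFoundedLT (fun w => IsDetour A z c x w y) List.length ⟨w, h⟩
  refine ⟨w', h', ?_⟩
  by_contra hnd
  obtain ⟨v, hv⟩ := List.exists_duplicate_iff_not_nodup.2 hnd
  obtain ⟨l₁, l₂, l₃, rfl⟩ := exists_eq_append_of_duplicate hv
  have hvz : v ≠ z := by
    rintro rfl
    exact h'.not_duplicate hv
  have hshort : IsDetour A z c x (l₁ ++ v :: l₃) y := by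
    obtain ⟨hwalk₁, hvc, hwalk⟩ := isWalkAvoiding_append_cons.1 h'.isWalkAvoiding
    obtain ⟨-, -, hwalk₃⟩ := isWalkAvoiding_append_cons.1 hwalk
    refine ⟨isWalkAvoiding_append_cons.2 ⟨hwalk₁, hvc, hwalk₃⟩, ?_, v, by simp, hvz⟩
    exact fun hz => h'.not_duplicate (hz.mono_sublist (by simp))
  have := hmin hshort (by simp; omega)
  simp only [List.length_append, List.length_cons] at this
  omega

theorem isCycleOn_append {p : List V} (h : IsDetour A z c y w x) (hw : w.Nodup)
    (hp : IsPathFromTo A p x y) (hpc : p ⊆ c) : IsCycleOn A (p ++ w) := by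
  have hwne := h.ne_nil
  have hlenp := List.length_pos_iff.2 hp.1.1
  have hlenw := List.length_pos_iff.2 hwne
  obtain ⟨hch, hwc⟩ := h.isWalkAvoiding
  rw [List.isChain_cons, List.isChain_append, List.head?_append_of_ne_nil _ hwne] at hch
  refine ⟨by simp; omega, List.nodup_append'.2 ⟨hp.nodup, hw, ?_⟩, ?_, ?_⟩
  · exact fun v hvp hvw => hwc v hvw (hpc hvp)
  · exact List.isChain_append.2 ⟨hp.isChain, hch.2.1, by simpa [hp.2.2] using hch.1⟩
  · rw [List.getLast?_append_of_ne_nil _ hwne, List.head?_append_of_ne_nil _ hp.1.1, hp.2.1]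
    exact hch.2.2.2

end IsDetour

theorem separates_of_forall_not_isDetour (hw : IsWalkAvoiding A c u w y)
    (hwz : ¬ w.Duplicate z) (huc : u ∉ c) (huz : u ≠ z) (h : ∀ w', ¬ IsDetour A z c x w' y) :
    Separates A z c x u := by
  intro w' hw'
  by_contra hz
  refine h (w' ++ u :: w) ⟨isWalkAvoiding_append_cons.2 ⟨hw', huc, hw⟩, ?_, u, by simp, huz⟩
  exact not_duplicate_append hz (by rwa [List.duplicate_cons_iff_of_ne huz.symm])

theorem StronglyConnected.separates_of_forall_not_isDetour (hconn : StronglyConnected A)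
    (huc : u ∉ c) (huz : u ≠ z) (hx : x ∈ c) (h : ∀ y ∈ c, ∀ w, ¬ IsDetour A z c x w y) :
    Separates A z c x u := by
  obtain ⟨y, hy, w, hw, hnd⟩ := hconn.exists_isWalkAvoiding huc hx
  exact _root_.separates_of_forall_not_isDetour hw (fun hz => hz.not_nodup hnd) huc huz (h y hy)

theorem Separates.twoPathCountOn_add_outDegOn_le_one (hsep : Separates A z c x u) (huc : u ∉ c)
    (huz : u ≠ z) (h : ∀ w, ¬ IsDetour A z c x w y) :
    twoPathCountOn A x u {v | v ∈ c}ᶜ + outDegOn A u {y} ≤ 1 := by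
  by_cases huy : A u y
  · have hzero : twoPathCountOn A x u {v | v ∈ c}ᶜ = 0 := by
      rw [twoPathCountOn, Set.sep_eq_empty_iff_mem_false.2, Set.ncard_empty]
      rintro v hv ⟨hxv, hvu⟩
      have hwalk : IsWalkAvoiding A c x [v, u] y :=
        isWalkAvoiding_cons.2 ⟨hxv, hv, isWalkAvoiding_cons.2 ⟨hvu, huc, isWalkAvoiding_nil.2 huy⟩⟩
      exact h [v, u] ⟨hwalk, by simp [List.duplicate_cons_iff, huz.symm], u, by simp, huz⟩
    have := outDegOn_singleton_le_one (A := A) (x := u) y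
    omega
  · have hzero : outDegOn A u {y} = 0 := outDegOn_eq_zero (by simpa using huy)
    have := hsep.twoPathCountOn_le_one
    omega

end Walks

/-! ### Ears -/

section Ears

variable {A : V → V → Prop} {z a b u x y : V} {c p r s w w' : List V}

/-- An optimal cycle cut into a path `p` from `a` to `b` and the segment `s` strictly between `b`
and `a`, together with a detour `w` from `b` to `a`. -/
structure IsEar (A : V → V → Prop) (z : V) (p s w : List V) (a b : V) : Prop where
  isOptimalCycle : IsOptimalCycle A z (p ++ s)
  isPathFromTo : IsPathFromTo A p a b
  isDetour : IsDetour A z (p ++ s) b w a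

theorem IsOptimalCycle.exists_isEar (hc : IsOptimalCycle A z c) (hx : x ∈ c) (hy : y ∈ c)
    (h : IsDetour A z c x w y) : ∃ p s, IsEar A z p s w y x := by
  obtain ⟨p, s, hrot, hhead, hlast⟩ := exists_isRotated_append_of_mem hx hy
  have hps := hc.of_isRotated hrot
  exact ⟨p, s, hps, hps.isCycleOn.isPathFromTo_left hhead hlast, h.congr fun _ => hrot.mem_iff⟩

/-- An ear whose segment `s` is shortest among all ears, over all optimal cycles. -/
structure IsMinEar (A : V → V → Prop) (z : V) (p s w : List V) (a b : V) : Prop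
    extends IsEar A z p s w a b where
  length_le : ∀ {p' s' w' a' b'}, IsEar A z p' s' w' a' b' → s.length ≤ s'.length

theorem IsEar.exists_isMinEar (h : IsEar A z p s w a b) : ∃ p s w a b, IsMinEar A z p s w a b := by
  obtain ⟨s, ⟨p, w, a, b, hear⟩, hmin⟩ := exists_minimalFor_of_wellFoundedLT
    (fun s => ∃ p w a b, IsEar A z p s w a b) List.length ⟨s, p, w, a, b, h⟩
  exact ⟨p, s, w, a, b, hear, fun h' => (le_total _ _).elim id (hmin ⟨_, _, _, _, h'⟩)⟩

namespace IsMinEar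

theorem not_isDetour_to (h : IsMinEar A z p s w a b) (hy : y ∈ s) :
    ¬ IsDetour A z (p ++ s) b w' y := by
  intro hw'
  obtain ⟨s₁, s₂, rfl⟩ := List.append_of_mem hy
  have hrot : (p ++ (s₁ ++ y :: s₂)).IsRotated (y :: (s₂ ++ p) ++ s₁) := by
    simpa using List.isRotated_append (l := p ++ s₁) (l' := y :: s₂)
  have hopt := h.isOptimalCycle.of_isRotated hrot
  have hpath : IsPathFromTo A (y :: (s₂ ++ p)) y b :=
    hopt.isCycleOn.isPathFromTo_left rfl (by simp [List.getLast?_cons, h.isPathFromTo.2.2])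
  have := h.length_le ⟨hopt, hpath, hw'.congr fun _ => hrot.mem_iff⟩
  simp at this

theorem not_isDetour_from (h : IsMinEar A z p s w a b) (hy : y ∈ s) :
    ¬ IsDetour A z (p ++ s) y w' a := by
  intro hw'
  obtain ⟨s₁, s₂, rfl⟩ := List.append_of_mem hy
  have hlist : p ++ (s₁ ++ y :: s₂) = p ++ (s₁ ++ [y]) ++ s₂ := by simp
  have hopt := h.isOptimalCycle
  rw [hlist] at hopt hw'
  have hpath : IsPathFromTo A (p ++ (s₁ ++ [y])) a y :=
    hopt.isCycleOn.isPathFromTo_left (by simp [h.isPathFromTo.2.1]) (by simp)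
  have := h.length_le ⟨hopt, hpath, hw'⟩
  simp only [List.length_append, List.length_cons] at this
  omega

theorem separates_to (h : IsMinEar A z p s w a b) (hu : u ∈ w) (huz : u ≠ z) (hy : y ∈ s) :
    Separates A z (p ++ s) u y := by
  obtain ⟨w₁, w₂, rfl⟩ := List.append_of_mem hu
  obtain ⟨hwalk, huc, -⟩ := isWalkAvoiding_append_cons.1 h.isDetour.isWalkAvoiding
  have hdup : ¬ w₁.reverse.Duplicate z := fun hz => h.isDetour.flip.not_duplicate
    (hz.mono_sublist (List.reverse_sublist.2 (List.sublist_append_left ..)))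
  exact (separates_of_forall_not_isDetour hwalk.flip hdup huc huz
    fun _ hw' => h.not_isDetour_to hy hw'.flip).flip

theorem separates_from (h : IsMinEar A z p s w a b) (hu : u ∈ w) (huz : u ≠ z) (hy : y ∈ s) :
    Separates A z (p ++ s) y u := by
  obtain ⟨w₁, w₂, rfl⟩ := List.append_of_mem hu
  obtain ⟨-, huc, hwalk⟩ := isWalkAvoiding_append_cons.1 h.isDetour.isWalkAvoiding
  have hdup : ¬ w₂.Duplicate z := fun hz => h.isDetour.not_duplicate (hz.mono_sublist (by simp))
  exact separates_of_forall_not_isDetour hwalk hdup huc huz fun _ => h.not_isDetour_from hy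

theorem degOn_add_one_le [Finite V] (h : IsMinEar A z p s w a b) (hu : u ∈ w) (huz : u ≠ z) :
    degOn A u {v | v ∈ p ++ s} + 1 ≤ p.length + inDegOn A u {b} + outDegOn A u {a} := by
  have hins : ¬ CanInsert A p u := fun hins =>
    h.isOptimalCycle.not_canInsert (h.isDetour.isWalkAvoiding.2 u hu) (hins.append_right s)
  have hp := degOn_add_one_le_of_not_canInsert h.isPathFromTo.2.1 h.isPathFromTo.2.2 hins
  have hs : degOn A u {v | v ∈ s} = 0 := degOn_eq_zero
    (fun _ hv => (h.separates_to hu huz hv).not_arc)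
    (fun _ hv => (h.separates_from hu huz hv).not_arc)
  have hsplit : degOn A u {v | v ∈ p ++ s} ≤ degOn A u {v | v ∈ p} + degOn A u {v | v ∈ s} :=
    degOn_le_add fun _ => List.mem_append.1
  omega

end IsMinEar

theorem IsPathFromTo.exists_not_canInsert (hp : IsPathFromTo A p a b) (hpc : p ⊆ c) :
    ∃ r, IsPathFromTo A r a b ∧ p ⊆ r ∧ r ⊆ c ∧ ∀ y ∈ c, y ∉ r → ¬ CanInsert A r y := by
  obtain ⟨r, ⟨hr, hpr, hrc⟩, hmin⟩ := exists_minimalFor_of_wellFoundedLT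
    (fun r => IsPathFromTo A r a b ∧ p ⊆ r ∧ r ⊆ c) (fun r => c.length - r.length)
    ⟨p, hp, List.Subset.refl p, hpc⟩
  refine ⟨r, hr, hpr, hrc, fun y hyc hyr hins => ?_⟩
  obtain ⟨r', hr', hperm⟩ := hins.exists_isPathFromTo hr hyr
  have hr'c : r' ⊆ c := List.Subset.trans hperm.subset (List.cons_subset.2 ⟨hyc, hrc⟩)
  have hlen : r'.length = r.length + 1 := hperm.length_eq
  have hle := length_le_of_nodup_of_subset hr'.nodup hr'c
  have hpr' : p ⊆ r' := List.Subset.trans (List.subset_cons_of_subset y hpr) hperm.symm.subset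
  have := hmin ⟨hr', hpr', hr'c⟩ (by simp only; omega)
  simp only at this
  omega

theorem IsOptimalCycle.exists_mem_notMem_ne (hc : IsOptimalCycle A z c)
    (hr : IsPathFromTo A r a b) (hrc : r ⊆ c) (hw : IsDetour A z c b w a) :
    ∃ y ∈ c, y ∉ r ∧ y ≠ z := by
  by_contra! hall
  obtain ⟨w', hw', hnd⟩ := hw.exists_nodup
  have hcycle := hw'.isCycleOn_append hnd hr hrc
  have hpos := List.length_pos_iff.2 hw'.ne_nil
  have hcz : c.length ≤ (z :: r).length := length_le_of_nodup_of_subset hc.isCycleOn.2.1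
    fun v hv => List.mem_cons.2 (or_iff_not_imp_right.2 (hall v hv))
  have hle := hc.length_le _ hcycle
  rw [List.length_append] at hle
  rw [List.length_cons] at hcz
  have hzr (hz : z ∈ c) : z ∈ r := by
    have hmem := hc.mem_of_length_eq _ hcycle (by rw [List.length_append]; omega) hz
    exact (List.mem_append.1 hmem).resolve_right fun hzw => hw'.isWalkAvoiding.2 z hzw hz
  have hcr : c ⊆ r := fun v hv => by
    by_contra hvr
    obtain rfl := hall v hv hvr
    exact hvr (hzr hv)
  have := length_le_of_nodup_of_subset hc.isCycleOn.2.1 hcr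
  omega

theorem IsPathFromTo.degOn_add_length_add_one_le [Finite V] (hr : IsPathFromTo A r a b)
    (hc : c.Nodup) (hrc : r ⊆ c) (hyc : y ∈ c) (hyr : y ∉ r) (hyy : ¬ A y y)
    (hins : ¬ CanInsert A r y) : degOn A y {v | v ∈ c} + r.length + 1 ≤ 2 * c.length := by
  have hon := degOn_add_one_le_of_not_canInsert hr.2.1 hr.2.2 hins
  have hoff := degOn_add_two_le (S := {v | v ∈ c} \ {v | v ∈ r}) (Set.toFinite _) ⟨hyc, hyr⟩ hyy
  have hsplit : degOn A y {v | v ∈ c} ≤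
      degOn A y {v | v ∈ r} + degOn A y ({v | v ∈ c} \ {v | v ∈ r}) :=
    degOn_le_add fun _ hv => or_iff_not_imp_left.2 (⟨hv, ·⟩)
  have hcard := Set.ncard_sdiff_add_ncard_of_subset (s := {v | v ∈ r}) (t := {v | v ∈ c}) hrc
  rw [ncard_setOf_mem_of_nodup hr.nodup, ncard_setOf_mem_of_nodup hc] at hcard
  have := inDegOn_singleton_le_one (A := A) (x := y) b
  have := outDegOn_singleton_le_one (A := A) (x := y) a
  omega

end Ears

/-! ### Nonadjacent vertices of small degree sum -/

section DegreeSum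

variable [Finite V] {A : V → V → Prop} {z a b : V} {c p s w : List V}

theorem IsMinEar.exists_deg_add_deg_add_two_le (h : IsMinEar A z p s w a b)
    (hloops : ∀ v, ¬ A v v) : ∃ u y, u ≠ z ∧ y ≠ z ∧ u ≠ y ∧ ¬ DAdj A u y ∧
      deg A u + deg A y + 2 ≤ 2 * Nat.card V := by
  have hnd := h.isOptimalCycle.isCycleOn.2.1
  obtain ⟨r, hr, hpr, hrc, hins⟩ := h.isPathFromTo.exists_not_canInsert
    (List.subset_append_left p s)
  obtain ⟨y, hyc, hyr, hyz⟩ := h.isOptimalCycle.exists_mem_notMem_ne hr hrc h.isDetour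
  have hys : y ∈ s := (List.mem_append.1 hyc).resolve_left fun hyp => hyr (hpr hyp)
  obtain ⟨u, hu, huz⟩ := h.isDetour.exists_ne
  have huc := h.isDetour.isWalkAvoiding.2 u hu
  have hto := h.separates_to hu huz hys
  have hfrom := h.separates_from hu huz hys
  refine ⟨u, y, huz, hyz, ?_, not_or.2 ⟨hto.not_arc, hfrom.not_arc⟩, ?_⟩
  · rintro rfl
    exact huc hyc
  have hdeg := deg_add_deg_add_two_le (S := {v | v ∈ p ++ s}) huc (hloops u) hto.not_arc
    hfrom.not_arc
  have hdegu := h.degOn_add_one_le hu huz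
  have hdegy := hr.degOn_add_length_add_one_le hnd hrc hyc hyr (hloops y) (hins y hyc hyr)
  have hlen := length_le_of_nodup_of_subset h.isPathFromTo.nodup hpr
  have htwofrom := hfrom.twoPathCountOn_add_outDegOn_le_one huc huz fun _ => h.not_isDetour_from hys
  have htwoto : twoPathCountOn A u y {v | v ∈ p ++ s}ᶜ + inDegOn A u {b} ≤ 1 := by
    rw [← twoPathCountOn_flip]
    exact hto.flip.twoPathCountOn_add_outDegOn_le_one huc huz
      fun _ hw' => h.not_isDetour_to hys hw'.flip
  have hcard := Set.ncard_add_ncard_compl {v | v ∈ p ++ s}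
  rw [ncard_setOf_mem_of_nodup hnd] at hcard
  omega

theorem IsCycleOn.exists_deg_add_deg_add_two_le (hc : IsCycleOn A c) (hloops : ∀ v, ¬ A v v)
    (hconn : StronglyConnected A) (hlen : c.length + 2 ≤ Nat.card V)
    (h : ∀ x ∈ c, ∀ y ∈ c, ∀ w, ¬ IsDetour A z c x w y) :
    ∃ u y, u ≠ z ∧ y ≠ z ∧ u ≠ y ∧ ¬ DAdj A u y ∧ deg A u + deg A y + 2 ≤ 2 * Nat.card V := by
  obtain ⟨u, hu⟩ : ∃ u, u ∉ z :: c :=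
    exists_notMem_of_length_lt_card (by rw [List.length_cons]; omega)
  obtain ⟨huz, huc⟩ := not_or.1 (mt List.mem_cons.2 hu)
  obtain ⟨y, hyc, hyz⟩ : ∃ y ∈ c, y ≠ z := by
    by_contra! hall
    have := hc.1.trans (length_le_of_nodup_of_subset (l' := [z]) hc.2.1 (fun v hv =>
      List.mem_singleton.2 (hall v hv)))
    simp at this
  have hfrom (x : V) (hx : x ∈ c) : Separates A z c x u :=
    hconn.separates_of_forall_not_isDetour huc huz hx (h x hx)
  have hto (x : V) (hx : x ∈ c) : Separates A z c u x :=
    (hconn.flip.separates_of_forall_not_isDetour huc huz hx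
      fun v hv _ hw => h v hv x hx _ hw.flip).flip
  refine ⟨u, y, huz, hyz, ?_, not_or.2 ⟨(hto y hyc).not_arc, (hfrom y hyc).not_arc⟩, ?_⟩
  · rintro rfl
    exact huc hyc
  have hdeg := deg_add_deg_add_two_le (S := {v | v ∈ c}) huc (hloops u) (hto y hyc).not_arc
    (hfrom y hyc).not_arc
  have hdegu : degOn A u {v | v ∈ c} = 0 :=
    degOn_eq_zero (fun v hv => (hto v hv).not_arc) (fun v hv => (hfrom v hv).not_arc)
  have hdegy := degOn_add_two_le (S := {v | v ∈ c}) (Set.toFinite _) hyc (hloops y)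
  have := (hto y hyc).twoPathCountOn_le_one
  have := (hfrom y hyc).twoPathCountOn_le_one
  have := Set.ncard_add_ncard_compl {v | v ∈ c}
  omega

theorem StronglyConnected.exists_deg_add_deg_add_two_le [Nontrivial V] (hconn : StronglyConnected A)
    (hloops : ∀ v, ¬ A v v) (hlen : ∀ c, IsCycleOn A c → c.length + 2 ≤ Nat.card V) (z : V) :
    ∃ u y, u ≠ z ∧ y ≠ z ∧ u ≠ y ∧ ¬ DAdj A u y ∧ deg A u + deg A y + 2 ≤ 2 * Nat.card V := by
  obtain ⟨c, hc⟩ := exists_isOptimalCycle z hconn.exists_isCycleOn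
  by_cases h : ∀ x ∈ c, ∀ y ∈ c, ∀ w, ¬ IsDetour A z c x w y
  · exact hc.isCycleOn.exists_deg_add_deg_add_two_le hloops hconn (hlen c hc.isCycleOn) h
  · push Not at h
    obtain ⟨x, hx, y, hy, w, hw⟩ := h
    obtain ⟨p, s, hear⟩ := hc.exists_isEar hx hy hw
    obtain ⟨_, _, _, _, _, hmin⟩ := hear.exists_isMinEar
    exact hmin.exists_deg_add_deg_add_two_le hloops

end DegreeSum

/-- Theorem D. -/
theorem hamiltonian_or_cycle_n_sub_one [Fintype V] (A : V → V → Prop)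
    (hloops : ∀ v, ¬ A v v)
    (hn : 3 ≤ Fintype.card V) (hconn : StronglyConnected A)
    (z₀ : V)
    (hdeg : ∀ x y : V, x ≠ z₀ → y ≠ z₀ → x ≠ y → ¬ DAdj A x y →
      deg A x + deg A y ≥ 2 * Fintype.card V - 1) :
    (∃ l : List V, IsCycleOn A l ∧ ∀ v : V, v ∈ l) ∨
      ∃ l : List V, IsCycleOn A l ∧ l.length = Fintype.card V - 1 := by
  have : Nontrivial V := Fintype.one_lt_card_iff_nontrivial.1 (by omega)
  by_contra! h
  obtain ⟨hham, hne⟩ := h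
  have hlen (c : List V) (hc : IsCycleOn A c) : c.length + 2 ≤ Nat.card V := by
    obtain ⟨v, hv⟩ := hham c hc
    have hlt : (v :: c).length ≤ Fintype.card V := (List.nodup_cons.2 ⟨hv, hc.2.1⟩).length_le_card
    have := hne c hc
    rw [List.length_cons] at hlt
    rw [Nat.card_eq_fintype_card]
    omega
  obtain ⟨u, y, hu, hy, huy, hadj, hle⟩ := hconn.exists_deg_add_deg_add_two_le hloops hlen z₀
  have := hdeg u y hu hy huy hadj
  rw [Nat.card_eq_fintype_card] at hle
  omega
end
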